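/- arXiv:1704.08191 — 2 statements merged into one kernel-verified Lean document; each statement's English description precedes it below -/
import Mathlib

section
/- For all real numbers α > 0, β > 0 and every real number m with |m| ≤ 2.0335, the modified extension of the classical beta function satisfies the inequality |B(α, β; m)| ≤ 1.6626 · B(α, β), where B(α, β) is the classical Euler beta function. -/
/-!
On `[0, 1]` one has `0 ≤ t (1 - t) ≤ 1 / 4`, so `exp (m t (1 - t)) ≤ exp (|m| / 4)`, and
`exp (2.0335 / 4) ≤ 1.6626` by a Taylor estimate. Integrating this pointwise bound against the
beta density, which is nonnegative and integrable for `α, β > 0`, gives the inequality.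
-/

open MeasureTheory Real

/-- The modified extension of the classical beta function (MECBF). -/
noncomputable def mecbf (α β m : ℝ) : ℝ :=
  ∫ t in (0:ℝ)..1, t ^ (α - 1) * (1 - t) ^ (β - 1) * Real.exp (m * t * (1 - t))

/-- The classical Euler beta function. -/
noncomputable def betaFn (x y : ℝ) : ℝ :=
  ∫ t in (0:ℝ)..1, t ^ (x - 1) * (1 - t) ^ (y - 1)

/-- The real beta density is, away from the endpoints, the norm of the complex one, whose
convergence is `Complex.betaIntegral_convergent`. -/
theorem betaDensity_intervalIntegrable {α β : ℝ} (hα : 0 < α) (hβ : 0 < β) :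
    IntervalIntegrable (fun t : ℝ => t ^ (α - 1) * (1 - t) ^ (β - 1)) volume 0 1 := by
  have h := (Complex.betaIntegral_convergent (u := α) (v := β) (by simpa) (by simpa)).norm
  refine h.congr_ae ?_
  -- The endpoint `t = 1` is discarded so that both bases are positive, as the norm formula for `cpow` requires.
  rw [Set.uIoc_of_le zero_le_one, ← restrict_Ioo_eq_restrict_Ioc]
  filter_upwards [self_mem_ae_restrict measurableSet_Ioo] with t ht
  have h1 : (0 : ℝ) < 1 - t := by linarith [ht.2]
  have e1 := Complex.norm_cpow_eq_rpow_re_of_pos ht.1 ((α : ℂ) - 1)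
  have e2 := Complex.norm_cpow_eq_rpow_re_of_pos h1 ((β : ℂ) - 1)
  push_cast at e2
  rw [norm_mul, e1, e2]
  simp

theorem exp_quarter_bound : Real.exp (2.0335 / 4) ≤ 1.6626 := by
  refine (Real.exp_bound' (by norm_num) (by norm_num) (n := 8) (by norm_num)).trans ?_
  norm_num [Finset.sum_range_succ, Nat.factorial]

theorem exp_weight_le {m t : ℝ} (hm : |m| ≤ 2.0335) (h0 : 0 ≤ t) (h1 : t ≤ 1) :
    Real.exp (m * t * (1 - t)) ≤ 1.6626 := by
  refine le_trans (Real.exp_le_exp.mpr ?_) exp_quarter_bound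
  have hp : 0 ≤ t * (1 - t) := mul_nonneg h0 (by linarith)
  have hq : t * (1 - t) ≤ 1 / 4 := by nlinarith [sq_nonneg (t - 1 / 2)]
  have := mul_le_mul_of_nonneg_right ((le_abs_self m).trans hm) hp
  linarith

theorem mecbf_inequality (α β m : ℝ) (hα : 0 < α) (hβ : 0 < β)
    (hm : |m| ≤ 2.0335) :
    |mecbf α β m| ≤ 1.6626 * betaFn α β := by
  have hI := betaDensity_intervalIntegrable hα hβ
  have hd : ∀ t ∈ Set.Icc (0 : ℝ) 1, 0 ≤ t ^ (α - 1) * (1 - t) ^ (β - 1) := fun t ht =>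
    mul_nonneg (Real.rpow_nonneg ht.1 _) (Real.rpow_nonneg (by linarith [ht.2]) _)
  have hnn : 0 ≤ mecbf α β m :=
    intervalIntegral.integral_nonneg zero_le_one fun t ht =>
      mul_nonneg (hd t ht) (Real.exp_pos _).le
  rw [abs_of_nonneg hnn, mecbf, betaFn, ← intervalIntegral.integral_const_mul]
  refine intervalIntegral.integral_mono_on zero_le_one
    (hI.mul_continuousOn (by fun_prop)) (hI.const_mul _) fun t ht => ?_
  rw [mul_comm (1.6626 : ℝ)]
  exact mul_le_mul_of_nonneg_left (exp_weight_le hm ht.1 ht.2) (hd t ht)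
end

section
/- For all real numbers α > 0, β > 0 and every real number m, the modified extension of the classical beta function satisfies the summation relation B(α, β; m) = Σ_{n=0}^∞ B(α+n, β+1; m). -/
/-!
For `0 < t < 1` the geometric series gives `∑ tⁿ (1 - t) = 1`, so the integrand of
`mecbf α β m` is the pointwise sum of the integrands of `mecbf (α + n) (β + 1) m`. All terms are
nonnegative and their sum is integrable because the Beta integral converges
(`mecbf_integrand_integrable`), so dominated convergence allows integrating term by term.
-/

open MeasureTheory Real

/-- The integrand of `mecbf` is integrable: the beta weight is the norm of the integrand of
`Complex.betaIntegral`, and the exponential factor is continuous. -/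
lemma mecbf_integrand_integrable (α β m : ℝ) (hα : 0 < α) (hβ : 0 < β) :
    IntegrableOn (fun t : ℝ => t ^ (α - 1) * (1 - t) ^ (β - 1) * Real.exp (m * t * (1 - t)))
      (Set.Ioo 0 1) := by
  have h := (Complex.betaIntegral_convergent (u := (α : ℂ)) (v := (β : ℂ))
    (by simpa using hα) (by simpa using hβ)).norm.mul_continuousOn
    (g := fun t : ℝ => Real.exp (m * t * (1 - t)))
    (Continuous.continuousOn (by fun_prop))
  rw [intervalIntegrable_iff_integrableOn_Ioo_of_le zero_le_one] at h
  refine h.congr_fun (fun t ht => ?_) measurableSet_Ioo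
  have h2 : (1 - (t : ℂ)) = ((1 - t : ℝ) : ℂ) := by push_cast; rfl
  simp only [norm_mul]
  rw [h2, Complex.norm_cpow_eq_rpow_re_of_pos ht.1,
    Complex.norm_cpow_eq_rpow_re_of_pos (sub_pos.2 ht.2)]
  simp

/-- Pointwise form of the summation: the geometric series `∑ tⁿ = (1 - t)⁻¹`. -/
lemma mecbf_integrand_hasSum (α β m t : ℝ) (ht : t ∈ Set.Ioo (0 : ℝ) 1) :
    HasSum (fun n : ℕ => t ^ (α + n - 1) * (1 - t) ^ (β + 1 - 1) * Real.exp (m * t * (1 - t)))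
      (t ^ (α - 1) * (1 - t) ^ (β - 1) * Real.exp (m * t * (1 - t))) := by
  have h1 : 0 < 1 - t := sub_pos.2 ht.2
  have h := (hasSum_geometric_of_lt_one ht.1.le ht.2).mul_left
    (t ^ (α - 1) * (1 - t) ^ β * Real.exp (m * t * (1 - t)))
  have hlim : t ^ (α - 1) * (1 - t) ^ (β - 1) * Real.exp (m * t * (1 - t)) =
      t ^ (α - 1) * (1 - t) ^ β * Real.exp (m * t * (1 - t)) * (1 - t)⁻¹ := by
    rw [Real.rpow_sub h1 β, Real.rpow_one]
    ring
  rw [hlim]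
  refine (congrArg (fun f : ℕ → ℝ => HasSum f _) (funext fun n => ?_)).mpr h
  rw [show α + n - 1 = (α - 1) + n by ring, Real.rpow_add ht.1, Real.rpow_natCast,
    add_sub_cancel_right]
  ring

theorem mecbf_second_summation (α β m : ℝ) (hα : 0 < α) (hβ : 0 < β) :
    mecbf α β m = ∑' n : ℕ, mecbf (α + n) (β + 1) m := by
  simp only [mecbf, intervalIntegral.integral_of_le zero_le_one, integral_Ioc_eq_integral_Ioo]
  refine (HasSum.tsum_eq ?_).symm
  have hsum := fun t ht => mecbf_integrand_hasSum α β m t ht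
  -- The terms are nonnegative on `(0, 1)`, so they serve as their own summable bounds.
  refine hasSum_integral_of_dominated_convergence
    (fun (n : ℕ) (t : ℝ) =>
      t ^ (α + n - 1) * (1 - t) ^ (β + 1 - 1) * Real.exp (m * t * (1 - t)))
    (fun n => (mecbf_integrand_integrable (α + n) (β + 1) m
      (by positivity) (by positivity)).aestronglyMeasurable)
    (fun n => ?_) ?_ ?_ ?_
  · filter_upwards [ae_restrict_mem measurableSet_Ioo] with t ht
    have h0 : 0 < t := ht.1
    have h1 : 0 < 1 - t := sub_pos.2 ht.2
    rw [Real.norm_of_nonneg (by positivity)]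
  · filter_upwards [ae_restrict_mem measurableSet_Ioo] with t ht
    exact (hsum t ht).summable
  · exact IntegrableOn.congr_fun (mecbf_integrand_integrable α β m hα hβ)
      (fun t ht => (hsum t ht).tsum_eq.symm) measurableSet_Ioo
  · filter_upwards [ae_restrict_mem measurableSet_Ioo] with t ht
    exact hsum t ht
end
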